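/- Let M be a d×n integer matrix of rank r all of whose r×r minors lie in {-1,0,1} (a unimodular matrix), let L = M·Mᵀ, and let L̄ be a d×r matrix whose columns are r linearly independent columns of L (equivalently, a basis of the ℤ-span of the columns of L chosen from among the columns of L). Then the r-dimensional Hausdorff measure of the zonotope Z(M) equals the r-dimensional Hausdorff measure of the parallelepiped Z(L̄). (Both sets lie in the r-dimensional column space of M in ℝ^d.) -/

import Mathlib

open MeasureTheory

/-- The zonotope generated by a `d × k` real matrix, viewed inside Euclidean
space `ℝ^d` (so that Hausdorff measures are taken w.r.t. the Euclidean
metric): the image of the unit cube `[0,1]^k` under `x ↦ M x`. -/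
def zonotopeE {d k : ℕ} (M : Matrix (Fin d) (Fin k) ℝ) : Set (EuclideanSpace ℝ (Fin d)) :=
  {y | ∃ x : Fin k → ℝ, (∀ i, x i ∈ Set.Icc (0 : ℝ) 1) ∧
    y = (WithLp.equiv 2 (Fin d → ℝ)).symm (M.mulVec x)}

/-!
The `r` columns of `L` chosen in `L̄` are indexed by `r` rows of `M`. These form a matrix `N` with
`L̄ = M * Nᵀ`, hence span the row space of `M`, so that `M = F * N` for some `F` with independent
columns. Then `Z(M) = F '' Z(N)` and `Z(L̄) = F '' Z(N * Nᵀ)`, and since `F` rescales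
`r`-dimensional Hausdorff measure by a constant, it remains to compare two volumes in `ℝ^r`, namely
to see that `Z(N)` has volume `det (N * Nᵀ)`.

Both quantities obey the same deletion–contraction recursion. If the first column of `N` is the
first basis vector, removing it removes from `Z(N)` a unit segment, which lowers the volume by that
of the projection along the segment, and it removes from `N * Nᵀ` a rank-one term, which lowers the
determinant by the complementary minor. Changing coordinates to make a nonzero column a basis vector
rescales all maximal minors simultaneously, so the induction runs over matrices whose nonzero
maximal minors share one absolute value `c`, not necessarily `1`; for these,
`c * vol Z(N) = det (N * Nᵀ)`.
-/

open Matrix Module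
open scoped Pointwise

section ConvexVolume

lemma volume_add_of_isCompact_of_convex {S T : Set ℝ} (hS : IsCompact S) (hS' : Convex ℝ S)
    (hSne : S.Nonempty) (hT : IsCompact T) (hT' : Convex ℝ T) (hTne : T.Nonempty) :
    volume (S + T) = volume S + volume T := by
  have volume_eq {U : Set ℝ} (hU : IsCompact U) (hU' : Convex ℝ U) (hUne : U.Nonempty) :
      volume U = ENNReal.ofReal (sSup U - sInf U) := by
    conv_lhs => rw [eq_Icc_of_connected_compact (hU'.isConnected hUne) hU, Real.volume_Icc]
  have diam_nonneg {U : Set ℝ} (hU : IsCompact U) : 0 ≤ sSup U - sInf U :=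
    sub_nonneg.2 (Real.sInf_le_sSup U hU.bddBelow hU.bddAbove)
  rw [volume_eq (hS.add hT) (hS'.add hT') (hSne.add hTne), volume_eq hS hS' hSne,
    volume_eq hT hT' hTne, ← ENNReal.ofReal_add (diam_nonneg hS) (diam_nonneg hT),
    csSup_add hSne hS.bddAbove hTne hT.bddAbove, csInf_add hSne hS.bddBelow hTne hT.bddBelow,
    add_sub_add_comm]

variable {E : Type*}

lemma isCompact_preimage_prodMk_right [TopologicalSpace E] [T2Space E]
    {K : Set (ℝ × E)} (hK : IsCompact K) (y : E) :
    IsCompact ((·, y) ⁻¹' K : Set ℝ) :=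
  (hK.image continuous_fst).of_isClosed_subset (hK.isClosed.preimage (by fun_prop))
    fun t ht => ⟨(t, y), ht, rfl⟩

lemma convex_preimage_prodMk_right [AddCommGroup E] [Module ℝ E] {K : Set (ℝ × E)}
    (hK : Convex ℝ K) (y : E) :
    Convex ℝ ((·, y) ⁻¹' K : Set ℝ) := fun t ht u hu a b ha hb hab => by
  simpa [← add_smul, hab] using hK ht hu ha hb hab

lemma preimage_prodMk_right_add_prod_zero [AddCommGroup E] (K : Set (ℝ × E)) (T : Set ℝ) (y : E) :
    ((·, y) ⁻¹' (K + T ×ˢ {0}) : Set ℝ) = (·, y) ⁻¹' K + T := by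
  ext t
  simp [Set.mem_add, Prod.ext_iff]

-- Cavalieri along the first factor: each nonempty fibre of `K` grows by the length of `T`.
lemma prod_volume_add_prod_zero [AddCommGroup E] [Module ℝ E] [TopologicalSpace E]
    [ContinuousAdd E] [T2Space E] [SecondCountableTopology E] [MeasurableSpace E] [BorelSpace E]
    (μ : Measure E) [SFinite μ] {K : Set (ℝ × E)} (hK : IsCompact K) (hK' : Convex ℝ K)
    {T : Set ℝ} (hT : IsCompact T) (hT' : Convex ℝ T) (hTne : T.Nonempty) :
    (volume.prod μ) (K + T ×ˢ {0}) = (volume.prod μ) K + volume T * μ (Prod.snd '' K) := by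
  have hproj : MeasurableSet (Prod.snd '' K) := (hK.image continuous_snd).measurableSet
  have hfibre (y : E) : volume ((·, y) ⁻¹' (K + T ×ˢ {0}) : Set ℝ) =
      volume ((·, y) ⁻¹' K : Set ℝ) + (Prod.snd '' K).indicator (fun _ => volume T) y := by
    have hne : ((·, y) ⁻¹' K : Set ℝ).Nonempty ↔ y ∈ Prod.snd '' K := by
      simp [Set.Nonempty]
    rw [preimage_prodMk_right_add_prod_zero]
    by_cases hy : y ∈ Prod.snd '' K
    · rw [Set.indicator_of_mem hy, volume_add_of_isCompact_of_convex
        (isCompact_preimage_prodMk_right hK y) (convex_preimage_prodMk_right hK' y) (hne.2 hy)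
        hT hT' hTne]
    · rw [Set.indicator_of_notMem hy, Set.not_nonempty_iff_eq_empty.1 (mt hne.1 hy),
        Set.empty_add, measure_empty, add_zero]
  rw [Measure.prod_apply_symm (hK.add (hT.prod isCompact_singleton)).measurableSet,
    Measure.prod_apply_symm hK.measurableSet, lintegral_congr hfibre,
    lintegral_add_right _ (measurable_const.indicator hproj), lintegral_indicator_const hproj]

lemma volume_add_single_image {r : ℕ} {K : Set (Fin (r + 1) → ℝ)} (hK : IsCompact K)
    (hK' : Convex ℝ K) {T : Set ℝ} (hT : IsCompact T) (hT' : Convex ℝ T) (hTne : T.Nonempty) :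
    volume (K + Pi.single 0 '' T) = volume K + volume T * volume (Fin.tail '' K) := by
  let e : (Fin (r + 1) → ℝ) ≃L[ℝ] ℝ × (Fin r → ℝ) := (Fin.consEquivL ℝ fun _ => ℝ).symm
  have he : MeasurePreserving e := volume_preserving_piFinSuccAbove (fun _ => ℝ) 0
  have volume_image (S : Set (Fin (r + 1) → ℝ)) : volume (e '' S) = volume S := by
    rw [← he.measure_preimage_emb e.toHomeomorph.measurableEmbedding,
      e.injective.preimage_image]
  have e_apply (z : Fin (r + 1) → ℝ) : e z = (z 0, Fin.tail z) := rfl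
  have e_single (t : ℝ) : e (Pi.single 0 t) = (t, 0) := by
    rw [e_apply, Pi.single_eq_same]
    rfl
  have hsegment : e '' (Pi.single 0 '' T) = T ×ˢ {0} := by
    simp only [Set.image_image, e_single, Set.prod_singleton]
  have hproj : Prod.snd '' (e '' K) = Fin.tail '' K := Set.image_image _ _ _
  rw [← volume_image, Set.image_add, hsegment, Measure.volume_eq_prod,
    prod_volume_add_prod_zero volume (hK.image e.continuous)
      (hK'.linear_image e.toLinearMap) hT hT' hTne, hproj, ← Measure.volume_eq_prod, volume_image]

end ConvexVolume

section Gram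

variable {R : Type*} [CommRing R] {r n : ℕ}

lemma det_eq_det_submatrix_succ {A : Matrix (Fin (r + 1)) (Fin (r + 1)) R}
    (hA : A 0 = Pi.single 0 1) : A.det = (A.submatrix Fin.succ Fin.succ).det := by
  rw [det_succ_row_zero, Fin.sum_univ_succ]
  simp [hA]

lemma mul_transpose_eq_add_vecMulVec {m : Type*} (N : Matrix m (Fin (n + 1)) R) :
    N * Nᵀ = N.submatrix id Fin.succ * (N.submatrix id Fin.succ)ᵀ +
      vecMulVec (N.col 0) (N.col 0) := by
  ext i j
  simp [mul_apply, Fin.sum_univ_succ, vecMulVec_apply, add_comm]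

lemma det_mul_transpose_of_col_zero_eq_single {N : Matrix (Fin (r + 1)) (Fin (n + 1)) R}
    (hN : N.col 0 = Pi.single 0 1) :
    (N * Nᵀ).det = (N.submatrix id Fin.succ * (N.submatrix id Fin.succ)ᵀ).det +
      (N.submatrix Fin.succ Fin.succ * (N.submatrix Fin.succ Fin.succ)ᵀ).det := by
  set G := N.submatrix id Fin.succ * (N.submatrix id Fin.succ)ᵀ with hG
  have hupdate : N * Nᵀ = G.updateRow 0 (G 0 + Pi.single 0 1) := by
    rw [mul_transpose_eq_add_vecMulVec, hN, ← hG]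
    ext i j
    refine Fin.cases ?_ (fun i => ?_) i <;> simp [vecMulVec_apply]
  have hminor : (G.updateRow 0 (Pi.single 0 1)).submatrix Fin.succ Fin.succ =
      N.submatrix Fin.succ Fin.succ * (N.submatrix Fin.succ Fin.succ)ᵀ := by
    ext i j
    simp [hG, mul_apply]
  rw [hupdate, det_updateRow_add, updateRow_eq_self,
    det_eq_det_submatrix_succ (updateRow_self ..), hminor]

end Gram

/-- A matrix is equimodular with modulus `c` if all its nonzero maximal minors have absolute value
`c`; a unimodular matrix of full row rank is the case `c = 1`. Columns are chosen by arbitrary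
functions, since a repeated column only contributes a zero minor. -/
def IsEquimodular {m n R : Type*} [Fintype m] [DecidableEq m] [CommRing R] [LinearOrder R]
    (N : Matrix m n R) (c : R) : Prop :=
  ∀ g : m → n, (N.submatrix id g).det = 0 ∨ |(N.submatrix id g).det| = c

namespace IsEquimodular

section

variable {m n R : Type*} [Fintype m] [DecidableEq m] [CommRing R] [LinearOrder R]
  {N : Matrix m n R} {c : R}

lemma of_injective (h : ∀ g : m → n, Function.Injective g →
    (N.submatrix id g).det = 0 ∨ |(N.submatrix id g).det| = c) : IsEquimodular N c := fun g => by
  by_cases hg : Function.Injective g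
  · exact h g hg
  · obtain ⟨i, j, hij, hne⟩ := Function.not_injective_iff.1 hg
    exact .inl <| det_zero_of_column_eq hne fun k => by simp [hij]

lemma submatrix_id {k : Type*} (hN : IsEquimodular N c) (f : k → n) :
    IsEquimodular (N.submatrix id f) c := fun g => hN (f ∘ g)

lemma mul_left [IsStrictOrderedRing R] (hN : IsEquimodular N c) (B : Matrix m m R) :
    IsEquimodular (B * N) (|B.det| * c) := fun g => by
  have hdet : ((B * N).submatrix id g).det = B.det * (N.submatrix id g).det := by
    rw [submatrix_mul B N id id g Function.bijective_id, submatrix_id_id, det_mul]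
  rw [hdet, abs_mul]
  exact (hN g).imp (fun h => by rw [h, mul_zero]) (fun h => by rw [h])

lemma of_det_mem [IsStrictOrderedRing R] (h : ∀ g : m → n, Function.Injective g →
    (N.submatrix id g).det ∈ ({-1, 0, 1} : Set R)) : IsEquimodular N 1 :=
  of_injective fun g hg => by
    rcases h g hg with hdet | hdet | hdet <;> simp_all

end

lemma submatrix_succ {R : Type*} [CommRing R] [LinearOrder R] {r n : ℕ}
    {N : Matrix (Fin (r + 1)) (Fin (n + 1)) R} {c : R} (hN : IsEquimodular N c)
    (h : N.col 0 = Pi.single 0 1) : IsEquimodular (N.submatrix Fin.succ Fin.succ) c := fun g => by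
  have hdet : (N.submatrix id (Fin.cons 0 (Fin.succ ∘ g))).det =
      ((N.submatrix Fin.succ Fin.succ).submatrix id g).det := by
    rw [← det_transpose, det_eq_det_submatrix_succ h, ← det_transpose]
    rfl
  exact hdet ▸ hN (Fin.cons 0 (Fin.succ ∘ g))

end IsEquimodular

/-- The zonotope generated by the columns of `N`. Unlike `zonotopeE` it lives in the plain function
space, where Lebesgue measure is the product measure. -/
def zonotope {m n : Type*} [Fintype n] (N : Matrix m n ℝ) : Set (m → ℝ) :=
  N.mulVec '' Set.Icc 0 1

section Zonotope

variable {m n : Type*} [Fintype n]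

lemma isCompact_zonotope (N : Matrix m n ℝ) : IsCompact (zonotope N) :=
  isCompact_Icc.image (by fun_prop)

lemma convex_zonotope (N : Matrix m n ℝ) : Convex ℝ (zonotope N) :=
  (convex_Icc 0 1).linear_image N.mulVecLin

lemma zonotope_mul {k : Type*} [Fintype m] (B : Matrix k m ℝ) (N : Matrix m n ℝ) :
    zonotope (B * N) = B.mulVec '' zonotope N := by
  simp only [zonotope, Set.image_image, mulVec_mulVec]

lemma zonotope_submatrix_id {k : Type*} (f : k → m) (N : Matrix m n ℝ) :
    zonotope (N.submatrix f id) = (· ∘ f) '' zonotope N := by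
  rw [zonotope, zonotope, Set.image_image]
  rfl

lemma zonotope_eq_add_image_smul_col {n : ℕ} (N : Matrix m (Fin (n + 1)) ℝ) :
    zonotope N = zonotope (N.submatrix id Fin.succ) + (· • N.col 0) '' Set.Icc (0 : ℝ) 1 := by
  have mulVec_cons (s : ℝ) (x : Fin n → ℝ) :
      N *ᵥ Fin.cons s x = N.submatrix id Fin.succ *ᵥ x + s • N.col 0 := by
    ext i
    simp [mulVec, dotProduct, Fin.sum_univ_succ, mul_comm, add_comm]
  ext z
  constructor
  · rintro ⟨x, hx, rfl⟩
    refine ⟨_, ⟨Fin.tail x, ⟨fun i => hx.1 _, fun i => hx.2 _⟩, rfl⟩,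
      _, ⟨x 0, ⟨hx.1 0, hx.2 0⟩, rfl⟩, ?_⟩
    rw [← Fin.cons_self_tail x, mulVec_cons, Fin.tail_cons, Fin.cons_zero]
  · rintro ⟨_, ⟨x, hx, rfl⟩, _, ⟨s, hs, rfl⟩, rfl⟩
    exact ⟨Fin.cons s x, ⟨Fin.cases hs.1 hx.1, Fin.cases hs.2 hx.2⟩, mulVec_cons s x⟩

lemma volume_zonotope_mul [Fintype m] [DecidableEq m] (B : Matrix m m ℝ) (N : Matrix m n ℝ) :
    volume (zonotope (B * N)) = ENNReal.ofReal |B.det| * volume (zonotope N) := by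
  rw [zonotope_mul, ← LinearMap.det_toLin', ← Measure.addHaar_image_linearMap]
  rfl

lemma volume_zonotope_of_square [DecidableEq n] (B : Matrix n n ℝ) :
    volume (zonotope B) = ENNReal.ofReal |B.det| := by
  have hcube : volume (zonotope (1 : Matrix n n ℝ)) = 1 := by
    simp [zonotope, Real.volume_Icc_pi]
  simpa only [mul_one, hcube] using volume_zonotope_mul B (1 : Matrix n n ℝ)

variable {r n : ℕ}

lemma volume_zonotope_of_col_zero_eq_single {N : Matrix (Fin (r + 1)) (Fin (n + 1)) ℝ}
    (hN : N.col 0 = Pi.single 0 1) :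
    volume (zonotope N) = volume (zonotope (N.submatrix id Fin.succ)) +
      volume (zonotope (N.submatrix Fin.succ Fin.succ)) := by
  have hsegment : (· • N.col 0) '' Set.Icc (0 : ℝ) 1 = Pi.single 0 '' Set.Icc (0 : ℝ) 1 := by
    simp only [hN, ← Pi.single_smul, smul_eq_mul, mul_one]
  have hproj : Fin.tail '' zonotope (N.submatrix id Fin.succ) =
      zonotope (N.submatrix Fin.succ Fin.succ) :=
    (zonotope_submatrix_id Fin.succ (N.submatrix id Fin.succ)).symm
  rw [zonotope_eq_add_image_smul_col, hsegment, volume_add_single_image (isCompact_zonotope _)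
    (convex_zonotope _) isCompact_Icc (convex_Icc 0 1) (Set.nonempty_Icc.2 zero_le_one),
    Real.volume_Icc, sub_zero, ENNReal.ofReal_one, one_mul, hproj]

lemma exists_det_ne_zero_mulVec_eq [Fintype m] [DecidableEq m] {v w : m → ℝ} (hv : v ≠ 0)
    (hw : w ≠ 0) : ∃ B : Matrix m m ℝ, B.det ≠ 0 ∧ B *ᵥ v = w := by
  obtain ⟨e, he⟩ := SeparatingDual.exists_continuousLinearEquiv_apply_eq (R := ℝ) hv hw
  refine ⟨LinearMap.toMatrix' e.toLinearEquiv.toLinearMap, ?_, ?_⟩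
  · rw [LinearMap.det_toMatrix']
    exact (LinearEquiv.isUnit_det' e.toLinearEquiv).ne_zero
  · rw [LinearMap.toMatrix'_mulVec]
    exact he

end Zonotope

section EquimodularVolume

variable {m n : Type*} [Fintype m] [Fintype n]

lemma volume_real_zonotope_mul_eq_of_mul_left [DecidableEq m] {B : Matrix m m ℝ} (hB : B.det ≠ 0)
    {N : Matrix m n ℝ} {c : ℝ}
    (h : volume.real (zonotope (B * N)) * (|B.det| * c) = ((B * N) * (B * N)ᵀ).det) :
    volume.real (zonotope N) * c = (N * Nᵀ).det := by
  have hvolume : volume.real (zonotope (B * N)) = |B.det| * volume.real (zonotope N) := by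
    simp [measureReal_def, volume_zonotope_mul]
  have hgram : ((B * N) * (B * N)ᵀ).det = B.det ^ 2 * (N * Nᵀ).det := by
    rw [transpose_mul, Matrix.mul_assoc, ← Matrix.mul_assoc N, det_mul, det_mul, det_transpose]
    ring
  refine mul_left_cancel₀ (pow_ne_zero 2 hB) ?_
  rw [← hgram, ← h, hvolume, ← sq_abs]
  ring

lemma volume_real_zonotope_of_isEmpty [IsEmpty n] [Nonempty m] (N : Matrix m n ℝ) :
    volume.real (zonotope N) = 0 := by
  have hsub : (zonotope N).Subsingleton := Set.subsingleton_of_subsingleton.image _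
  rw [measureReal_def, hsub.measure_zero, ENNReal.toReal_zero]

theorem IsEquimodular.volume_real_zonotope_mul_eq {r n : ℕ} {N : Matrix (Fin r) (Fin n) ℝ} {c : ℝ}
    (hN : IsEquimodular N c) : volume.real (zonotope N) * c = (N * Nᵀ).det := by
  induction n generalizing r c with
  | zero =>
    cases r with
    | zero =>
      have hc : c = 1 := by simpa [eq_comm] using hN id
      simp [hc, measureReal_def, volume_zonotope_of_square]
    | succ r => simp [volume_real_zonotope_of_isEmpty, Subsingleton.elim N 0, det_zero]
  | succ n ih =>
    by_cases hcol : N.col 0 = 0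
    · have hzonotope : zonotope N = zonotope (N.submatrix id Fin.succ) := by
        rw [zonotope_eq_add_image_smul_col, hcol]
        simp
      rw [hzonotope, ih (hN.submatrix_id Fin.succ), mul_transpose_eq_add_vecMulVec N, hcol,
        zero_vecMulVec, add_zero]
    cases r with
    | zero => exact absurd (Subsingleton.elim _ _) hcol
    | succ r =>
      obtain ⟨B, hB, hBcol⟩ := exists_det_ne_zero_mulVec_eq hcol
        (Pi.single_ne_zero_iff.2 one_ne_zero : (Pi.single 0 1 : Fin (r + 1) → ℝ) ≠ 0)
      refine volume_real_zonotope_mul_eq_of_mul_left hB ?_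
      have hBN : IsEquimodular (B * N) (|B.det| * c) := hN.mul_left B
      have hBNcol : (B * N).col 0 = Pi.single 0 1 := hBcol
      rw [measureReal_def, volume_zonotope_of_col_zero_eq_single hBNcol,
        ENNReal.toReal_add (isCompact_zonotope _).measure_ne_top
          (isCompact_zonotope _).measure_ne_top, add_mul, ← measureReal_def, ← measureReal_def,
        ih (hBN.submatrix_id Fin.succ), ih (hBN.submatrix_succ hBNcol),
        det_mul_transpose_of_col_zero_eq_single hBNcol]

theorem IsEquimodular.volume_zonotope_mul_eq {r n : ℕ} {N : Matrix (Fin r) (Fin n) ℝ} {c : ℝ}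
    (hN : IsEquimodular N c) :
    volume (zonotope N) * ENNReal.ofReal c = volume (zonotope (N * Nᵀ)) := by
  have hgram : 0 ≤ (N * Nᵀ).det := by
    simpa using (posSemidef_self_mul_conjTranspose N).det_nonneg
  rw [volume_zonotope_of_square, abs_of_nonneg hgram, ← hN.volume_real_zonotope_mul_eq,
    ENNReal.ofReal_mul measureReal_nonneg, ofReal_measureReal (isCompact_zonotope N).measure_ne_top]

end EquimodularVolume

section RankFactorization

variable {K m n ι : Type*} [Field K]

lemma mulVec_injective_of_rank_eq_card [Fintype ι] {A : Matrix m ι K}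
    (hA : A.rank = Fintype.card ι) :
    Function.Injective A.mulVec := by
  rw [mulVec_injective_iff, linearIndependent_iff_card_eq_finrank_span, Set.finrank,
    ← rank_eq_finrank_span_cols, hA]

lemma exists_eq_mul_submatrix_of_rank_eq_card [Finite m] [Fintype n] [Fintype ι]
    {M : Matrix m n K} (hM : M.rank = Fintype.card ι) {g : ι → m}
    (hg : LinearIndependent K (M.submatrix g id).row) :
    ∃ F : Matrix m ι K, Function.Injective F.mulVec ∧ M = F * M.submatrix g id := by
  have hspan : Submodule.span K (Set.range (M.submatrix g id).row) =
      Submodule.span K (Set.range M.row) := by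
    refine Submodule.eq_of_le_of_finrank_eq
      (Submodule.span_mono (Set.range_comp_subset_range g M.row)) ?_
    rw [finrank_span_eq_card hg, ← rank_eq_finrank_span_row, hM]
  have hrow (i : m) : ∃ a : ι → K, ∑ j, a j • (M.submatrix g id).row j = M.row i := by
    rw [← Submodule.mem_span_range_iff_exists_fun, hspan]
    exact Submodule.subset_span ⟨i, rfl⟩
  choose F hF using hrow
  have hfactor : M = of F * M.submatrix g id := by
    ext i k
    simpa [mul_apply] using (congrFun (hF i) k).symm
  refine ⟨of F, mulVec_injective_of_rank_eq_card (le_antisymm (rank_le_card_width _) ?_), hfactor⟩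
  calc Fintype.card ι = (of F * M.submatrix g id).rank := by rw [← hfactor, hM]
    _ ≤ (of F).rank := rank_mul_le_left _ _

lemma linearIndependent_row_of_linearIndependent_col_mul_transpose [Fintype n] {M : Matrix m n K}
    {N : Matrix ι n K} (h : LinearIndependent K (M * Nᵀ).col) : LinearIndependent K N.row :=
  .of_comp M.mulVecLin h

end RankFactorization

section HausdorffMeasure

lemma exists_hausdorffMeasure_image_eq_mul {E F : Type*}
    [NormedAddCommGroup E] [NormedSpace ℝ E] [FiniteDimensional ℝ E] [MeasurableSpace E]
    [BorelSpace E] [NormedAddCommGroup F] [NormedSpace ℝ F] [MeasurableSpace F] [BorelSpace F]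
    (μ : Measure E) [μ.IsAddHaarMeasure] {f : E →ₗ[ℝ] F} (hf : Function.Injective f) :
    ∃ κ : ENNReal, ∀ S : Set E, μH[finrank ℝ E] (f '' S) = κ * μ S := by
  let e : E ≃L[ℝ] LinearMap.range f := (LinearEquiv.ofInjective f hf).toContinuousLinearEquiv
  let ν : Measure E := (μH[finrank ℝ (LinearMap.range f)]).map e.symm
  refine ⟨ν.addHaarScalarFactor μ, fun S => ?_⟩
  calc μH[finrank ℝ E] (f '' S) = μH[finrank ℝ E] ((LinearMap.range f).subtypeₗᵢ '' (e '' S)) := by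
        rw [Set.image_image]
        rfl
    _ = μH[finrank ℝ E] (e '' S) :=
        (LinearMap.range f).subtypeₗᵢ.isometry.hausdorffMeasure_image (.inl (Nat.cast_nonneg _)) _
    _ = ν S := by
        rw [e.toLinearEquiv.finrank_eq, e.image_eq_preimage_symm]
        exact (e.symm.toHomeomorph.measurableEmbedding.map_apply _ S).symm
    _ = ν.addHaarScalarFactor μ * μ S := by
        conv_lhs => rw [Measure.isAddLeftInvariant_eq_smul ν μ]
        rfl

lemma exists_hausdorffMeasure_zonotopeE_mul_eq {d r : ℕ} {F : Matrix (Fin d) (Fin r) ℝ}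
    (hF : Function.Injective F.mulVec) : ∃ κ : ENNReal, ∀ {n : ℕ} (N : Matrix (Fin r) (Fin n) ℝ),
      μH[(r : ℝ)] (zonotopeE (F * N)) = κ * volume (zonotope N) := by
  let f : (Fin r → ℝ) →ₗ[ℝ] EuclideanSpace ℝ (Fin d) :=
    (WithLp.linearEquiv 2 ℝ (Fin d → ℝ)).symm.toLinearMap ∘ₗ F.mulVecLin
  have hf : Function.Injective f := (WithLp.linearEquiv 2 ℝ (Fin d → ℝ)).symm.injective.comp hF
  obtain ⟨κ, hκ⟩ := exists_hausdorffMeasure_image_eq_mul volume hf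
  refine ⟨κ, fun N => ?_⟩
  have himage : zonotopeE (F * N) = f '' zonotope N := by
    ext y
    simp [zonotopeE, zonotope, f, Pi.le_def, forall_and, eq_comm]
  simpa only [himage, finrank_fin_fun] using hκ (zonotope N)

end HausdorffMeasure

theorem stmt12_general (d n r : ℕ) (M : Matrix (Fin d) (Fin n) ℝ) (hrank : M.rank = r)
    (g : Fin r → Fin d) (c : ℝ) (hM : IsEquimodular (M.submatrix g id) c)
    (hind : LinearIndependent ℝ ((M * Mᵀ).submatrix id g).col) :
    μH[(r : ℝ)] (zonotopeE M) * ENNReal.ofReal c =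
      μH[(r : ℝ)] (zonotopeE ((M * Mᵀ).submatrix id g)) := by
  set N := M.submatrix g id
  have hL : (M * Mᵀ).submatrix id g = M * Nᵀ :=
    submatrix_mul M Mᵀ id id g Function.bijective_id
  rw [hL] at hind ⊢
  obtain ⟨F, hF, hMF⟩ := exists_eq_mul_submatrix_of_rank_eq_card
    (hrank.trans (Fintype.card_fin r).symm)
    (linearIndependent_row_of_linearIndependent_col_mul_transpose hind)
  obtain ⟨κ, hκ⟩ := exists_hausdorffMeasure_zonotopeE_mul_eq hF
  calc μH[(r : ℝ)] (zonotopeE M) * ENNReal.ofReal c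
      = κ * (volume (zonotope N) * ENNReal.ofReal c) := by
        rw [hMF, hκ, mul_assoc]
    _ = κ * volume (zonotope (N * Nᵀ)) := by rw [hM.volume_zonotope_mul_eq]
    _ = μH[(r : ℝ)] (zonotopeE (M * Nᵀ)) := by rw [← hκ, ← Matrix.mul_assoc, ← hMF]

/-- **Polyhedral matroid matrix tree theorem, arbitrary corank.** For a rank
`r` unimodular integer matrix `M` with `L = M Mᵀ`, and `L̄ = L.submatrix id g`
a `d × r` matrix formed by `r` linearly independent columns of `L`, the
`r`-dimensional Hausdorff measure of `Z(M)` equals that of the parallelepiped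
`Z(L̄)`. -/
theorem stmt12 (d n r : ℕ) (M : Matrix (Fin d) (Fin n) ℝ)
    (hint : ∀ i j, ∃ z : ℤ, M i j = (z : ℝ))
    (hrank : M.rank = r)
    (huni : ∀ (f : Fin r → Fin d) (g : Fin r → Fin n),
      Function.Injective f → Function.Injective g →
      (M.submatrix f g).det ∈ ({-1, 0, 1} : Set ℝ))
    (L : Matrix (Fin d) (Fin d) ℝ) (hLdef : L = M * M.transpose)
    (g : Fin r → Fin d) (hg : Function.Injective g)
    (hind : LinearIndependent ℝ (fun j : Fin r => fun i => L i (g j))) :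
    μH[(r : ℝ)] (zonotopeE M) = μH[(r : ℝ)] (zonotopeE (L.submatrix id g)) := by
  subst hLdef
  simpa using stmt12_general d n r M hrank g 1 (.of_det_mem fun h => huni g h hg) hind
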